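/- Let A, B, Q, R, P be as in the discrete algebraic Riccati setting (Q, R, P symmetric positive definite and P solving the Riccati equation), and let K* = −(R + Bᵀ P B)⁻¹ Bᵀ P A. Then for every initial state x₀ ∈ ℝⁿ, the closed-loop trajectory defined by x_{k+1} = (A + B K*) x_k converges to 0 as k → ∞. -/

import Mathlib

open Matrix

/-!
With the gain `K* = -(R + Bᴴ P B)⁻¹ Bᴴ P A`, completing the square turns the Riccati equation into
the descent identity `P - Mᴴ P M = Q + K*ᴴ R K*` for the closed-loop matrix `M = A + B K*`. Thus
`V x = xᴴ P x` decreases along each trajectory; being nonnegative it converges, so its decrements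
`xₖᴴ (P - Mᴴ P M) xₖ` tend to zero. The matrix of this last form is positive definite, which forces
`xₖ → 0`.
-/

open Filter Topology
open scoped ComplexOrder

section ClosedLoopDescent

variable {m n α : Type*} [Fintype m] [DecidableEq m] [Fintype n] [CommRing α] [StarRing α]

/-- The linear-quadratic regulator gain `K* = -(R + Bᴴ P B)⁻¹ Bᴴ P A` of the cost-to-go matrix `P`,
for the feedback `u = K* x`. It is `0` by convention when `R + Bᴴ P B` is singular. -/
noncomputable def lqrGain (A : Matrix n n α) (B : Matrix n m α) (R : Matrix m m α)
    (P : Matrix n n α) : Matrix m n α :=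
  -((R + Bᴴ * P * B)⁻¹ * Bᴴ * P * A)

/-- `P` solves the discrete algebraic Riccati equation of `(A, B, Q, R)`. The conjugate transpose
covers real and complex systems at once. -/
def IsDARESolution (A : Matrix n n α) (B : Matrix n m α) (Q : Matrix n n α) (R : Matrix m m α)
    (P : Matrix n n α) : Prop :=
  P = Aᴴ * P * A + Q - Aᴴ * P * B * (R + Bᴴ * P * B)⁻¹ * Bᴴ * P * A

variable {A : Matrix n n α} {B : Matrix n m α} {Q : Matrix n n α} {R : Matrix m m α}
  {P : Matrix n n α}

theorem mul_lqrGain (hS : IsUnit (R + Bᴴ * P * B)) :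
    (R + Bᴴ * P * B) * lqrGain A B R P = -(Bᴴ * P * A) := by
  rw [lqrGain, Matrix.mul_neg, Matrix.mul_assoc _ Bᴴ P, Matrix.mul_assoc _ (Bᴴ * P) A,
    mul_nonsing_inv_cancel_left _ _ ((isUnit_iff_isUnit_det _).mp hS)]

theorem IsDARESolution.sub_eq_add_mul_lqrGain (hP : IsDARESolution A B Q R P) :
    P - Q = Aᴴ * P * A + Aᴴ * P * B * lqrGain A B R P := by
  rw [sub_eq_iff_eq_add]
  nth_rewrite 1 [hP]
  simp only [lqrGain, Matrix.mul_neg, Matrix.mul_assoc]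
  abel

theorem IsDARESolution.sub_closedLoop_eq (hP : IsDARESolution A B Q R P)
    (hS : IsUnit (R + Bᴴ * P * B)) :
    P - (A + B * lqrGain A B R P)ᴴ * P * (A + B * lqrGain A B R P) =
      Q + (lqrGain A B R P)ᴴ * R * lqrGain A B R P := by
  have hgain := mul_lqrGain (A := A) hS
  have hsub := hP.sub_eq_add_mul_lqrGain
  generalize lqrGain A B R P = K at hgain hsub ⊢
  have hclosed : (A + B * K)ᴴ * P * (A + B * K) = P - Q - Kᴴ * R * K := calc
    (A + B * K)ᴴ * P * (A + B * K)
    _ = (Aᴴ * P * A + Aᴴ * P * B * K) + Kᴴ * (Bᴴ * P * A)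
          + Kᴴ * ((R + Bᴴ * P * B) * K) - Kᴴ * R * K := by
      simp only [conjTranspose_add, conjTranspose_mul, Matrix.add_mul, Matrix.mul_add,
        Matrix.mul_assoc]
      abel
    _ = P - Q - Kᴴ * R * K := by
      rw [← hsub, hgain, Matrix.mul_neg, add_neg_cancel_right]
  rw [hclosed]
  abel

end ClosedLoopDescent

section LyapunovStability

variable {n 𝕜 : Type*} [Fintype n] [RCLike 𝕜]

theorem re_star_dotProduct_self (w : n → 𝕜) : RCLike.re (star w ⬝ᵥ w) = ∑ j, ‖w j‖ ^ 2 := by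
  simp only [dotProduct, Pi.star_apply, RCLike.star_def, RCLike.conj_mul, ← RCLike.ofReal_pow,
    map_sum, RCLike.ofReal_re]

theorem tendsto_zero_of_tendsto_re_star_dotProduct_self {ι : Type*} {l : Filter ι}
    {v : ι → n → 𝕜} (h : Tendsto (fun i ↦ RCLike.re (star (v i) ⬝ᵥ v i)) l (𝓝 0)) :
    Tendsto v l (𝓝 0) := by
  refine tendsto_pi_nhds.mpr fun j ↦ tendsto_zero_iff_norm_tendsto_zero.mpr ?_
  have hsq : Tendsto (fun i ↦ ‖v i j‖ ^ 2) l (𝓝 0) := by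
    refine squeeze_zero (fun i ↦ sq_nonneg _) (fun i ↦ ?_) h
    rw [re_star_dotProduct_self]
    exact Finset.single_le_sum (fun k _ ↦ sq_nonneg ‖v i k‖) (Finset.mem_univ j)
  simpa using hsq.sqrt

theorem tendsto_zero_of_posDef_of_tendsto_re_dotProduct_mulVec {ι : Type*} {l : Filter ι}
    {W : Matrix n n 𝕜} (hW : W.PosDef) {v : ι → n → 𝕜}
    (h : Tendsto (fun i ↦ RCLike.re (star (v i) ⬝ᵥ W *ᵥ v i)) l (𝓝 0)) :
    Tendsto v l (𝓝 0) := by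
  classical
  open scoped MatrixOrder in
  obtain ⟨C, hC, rfl⟩ : ∃ C : Matrix n n 𝕜, IsUnit C ∧ W = Cᴴ * C :=
    CStarAlgebra.isStrictlyPositive_iff_eq_star_mul_self.mp hW.isStrictlyPositive
  have hCv : Tendsto (fun i ↦ C *ᵥ v i) l (𝓝 0) := by
    refine tendsto_zero_of_tendsto_re_star_dotProduct_self ?_
    simpa only [star_mulVec, ← dotProduct_mulVec, mulVec_mulVec] using h
  have hinv : Continuous fun w : n → 𝕜 ↦ C⁻¹ *ᵥ w := by fun_prop
  have hcancel (w : n → 𝕜) : C⁻¹ *ᵥ (C *ᵥ w) = w := by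
    rw [mulVec_mulVec, nonsing_inv_mul _ ((isUnit_iff_isUnit_det C).mp hC), one_mulVec]
  simpa only [Function.comp_def, hcancel, mulVec_zero] using (hinv.tendsto 0).comp hCv

theorem star_dotProduct_sub_conjTranspose_mul_mul_mulVec {α : Type*} [NonUnitalRing α]
    [StarRing α] (P M : Matrix n n α) (x : n → α) :
    star x ⬝ᵥ (P - Mᴴ * P * M) *ᵥ x =
      star x ⬝ᵥ P *ᵥ x - star (M *ᵥ x) ⬝ᵥ P *ᵥ (M *ᵥ x) := by
  rw [sub_mulVec, dotProduct_sub, star_mulVec, ← dotProduct_mulVec, mulVec_mulVec, mulVec_mulVec]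

theorem tendsto_pow_mulVec_zero_of_posDef_sub [DecidableEq n] {P M : Matrix n n 𝕜}
    (hP : P.PosSemidef) (hdescent : (P - Mᴴ * P * M).PosDef) (x : n → 𝕜) :
    Tendsto (fun k : ℕ ↦ (M ^ k) *ᵥ x) atTop (𝓝 0) := by
  set V : ℕ → ℝ := fun k ↦ RCLike.re (star ((M ^ k) *ᵥ x) ⬝ᵥ P *ᵥ ((M ^ k) *ᵥ x))
  have hdecrement (k : ℕ) :
      RCLike.re (star ((M ^ k) *ᵥ x) ⬝ᵥ (P - Mᴴ * P * M) *ᵥ ((M ^ k) *ᵥ x)) = V k - V (k + 1) := by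
    rw [star_dotProduct_sub_conjTranspose_mul_mul_mulVec, map_sub, mulVec_mulVec x M (M ^ k),
      ← pow_succ']
  have hanti : Antitone V := antitone_nat_of_succ_le fun k ↦ sub_nonneg.mp <|
    hdecrement k ▸ hdescent.posSemidef.re_dotProduct_nonneg _
  have hbdd : BddBelow (Set.range V) :=
    ⟨0, Set.forall_mem_range.mpr fun _ ↦ hP.re_dotProduct_nonneg _⟩
  have hlim : Tendsto V atTop (𝓝 (⨅ k, V k)) := tendsto_atTop_ciInf hanti hbdd
  refine tendsto_zero_of_posDef_of_tendsto_re_dotProduct_mulVec hdescent ?_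
  simpa only [hdecrement, sub_self] using hlim.sub ((tendsto_add_atTop_iff_nat 1).mpr hlim)

end LyapunovStability

theorem dare_closed_loop_convergence_general {m n 𝕜 : Type*} [Fintype m] [DecidableEq m]
    [Fintype n] [DecidableEq n] [RCLike 𝕜] {A : Matrix n n 𝕜} {B : Matrix n m 𝕜}
    {Q : Matrix n n 𝕜} {R : Matrix m m 𝕜} {P : Matrix n n 𝕜}
    (hQ : Q.PosDef) (hR : R.PosSemidef) (hP : P.PosSemidef) (hS : IsUnit (R + Bᴴ * P * B))
    (hriccati : IsDARESolution A B Q R P) (x₀ : n → 𝕜) :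
    Tendsto (fun k : ℕ ↦ ((A + B * lqrGain A B R P) ^ k) *ᵥ x₀) atTop (𝓝 0) := by
  refine tendsto_pow_mulVec_zero_of_posDef_sub hP ?_ x₀
  rw [hriccati.sub_closedLoop_eq hS]
  exact hQ.add_posSemidef (hR.conjTranspose_mul_mul_same _)

/-- Under the discrete algebraic Riccati setting, with the LQR feedback gain
`K* = −(R + Bᵀ P B)⁻¹ Bᵀ P A`, the closed-loop trajectory `x_{k+1} = (A + B K*) x_k` converges
to `0` from every initial state `x₀`. -/
theorem dare_closed_loop_convergence
    (n m : ℕ)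
    (A : Matrix (Fin n) (Fin n) ℝ) (B : Matrix (Fin n) (Fin m) ℝ)
    (Q : Matrix (Fin n) (Fin n) ℝ) (R : Matrix (Fin m) (Fin m) ℝ)
    (P : Matrix (Fin n) (Fin n) ℝ)
    (hQsymm : Q.IsSymm) (hQ : Q.PosDef) (hRsymm : R.IsSymm) (hR : R.PosDef)
    (hPsymm : P.IsSymm) (hP : P.PosDef)
    (hriccati : P = Aᵀ * P * A + Q - Aᵀ * P * B * (R + Bᵀ * P * B)⁻¹ * Bᵀ * P * A)
    (x₀ : Fin n → ℝ) :
    let Kstar : Matrix (Fin m) (Fin n) ℝ := -((R + Bᵀ * P * B)⁻¹ * Bᵀ * P * A)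
    Filter.Tendsto (fun k : ℕ => ((A + B * Kstar) ^ k).mulVec x₀)
      Filter.atTop (nhds 0) := by
  -- Over `ℝ` the star is the identity, so `Aᴴ` and `Aᵀ` are definitionally equal.
  exact dare_closed_loop_convergence_general hQ hR.posSemidef hP.posSemidef
    (hR.add_posSemidef (hP.posSemidef.conjTranspose_mul_mul_same B)).isUnit hriccati x₀
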